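/- Let q > 3 be an odd prime power. The number of pairs (A,B) ∈ F_q × F_q such that f_{A,B}(x) = x(x^{q²} + A x^q + B x) is planar on F_{q³} equals 3q - 2 - 4·gcd(3, q-1). -/

import Mathlib

namespace PlanarCount

/-- The properties of the `q`-Frobenius of `F_{q³}` over `F_q` which are used below. -/
structure IsFrob (F E : Type*) [Field F] [Field E] [Algebra F E] (σ : E →ₐ[F] E) : Prop where
  cube : ∀ x, σ (σ (σ x)) = x
  indep : ∀ v0 v1 v2 : E, (∀ e, v0 * e + v1 * σ e + v2 * σ (σ e) = 0) → v0 = 0 ∧ v1 = 0 ∧ v2 = 0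
  fix : ∀ x, σ x = x → ∃ a, algebraMap F E a = x
  root : ∀ t s : F, (∀ x : F, x ^ 3 - t * x ^ 2 + s * x - 1 ≠ 0) →
    ∃ u : E, u ^ 3 - algebraMap F E t * u ^ 2 + algebraMap F E s * u - 1 = 0

lemma miss {F : Type*} [Finite F] (h : F → F) (a : F) : ∃ y, ∀ x, x ≠ a → h x ≠ y := by
  by_contra hc
  push Not at hc
  have hs : Function.Surjective h := fun y => by
    obtain ⟨x, _, hx⟩ := hc y
    exact ⟨x, hx⟩
  have hi := Finite.injective_iff_surjective.mpr hs
  obtain ⟨x, hx, hxa⟩ := hc (h a)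
  exact hx (hi hxa)

section
variable {F E : Type*} [Field F] [Field E] [Algebra F E]

open Polynomial in
lemma isFrob_frob (q : ℕ) [Fintype F] [Fintype E]
    (hF : Fintype.card F = q) (hE : Fintype.card E = q ^ 3) :
    ∃ σ : E →ₐ[F] E, IsFrob F E σ ∧ ∀ x, σ x = x ^ q := by
  have hq1 : 1 < q := hF ▸ Fintype.one_lt_card
  have hσ : ∀ x, FiniteField.frobeniusAlgHom F E x = x ^ q := by
    intro x; rw [FiniteField.coe_frobeniusAlgHom, hF]
  have hqq : q < q ^ 2 := by nlinarith
  have hqqq : q ^ 2 < q ^ 3 := Nat.pow_lt_pow_right hq1 (by norm_num)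
  refine ⟨FiniteField.frobeniusAlgHom F E, ⟨?_, ?_, ?_, ?_⟩, hσ⟩
  · intro x
    simp only [hσ, ← pow_mul]
    have := FiniteField.pow_card x
    rw [hE] at this
    rw [show q * q * q = q ^ 3 by ring, this]
  · intro v0 v1 v2 h
    have hp : (C v0 * X + C v1 * X ^ q + C v2 * X ^ (q ^ 2) : E[X]) = 0 := by
      apply Polynomial.eq_zero_of_natDegree_lt_card_of_eval_eq_zero _ (f := (id : E → E))
        Function.injective_id
      · intro e
        have := h e
        simp only [hσ, ← pow_mul, ← pow_two] at this
        simpa using this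
      · rw [hE]
        refine lt_of_le_of_lt ?_ hqqq
        refine natDegree_add_le_of_degree_le (natDegree_add_le_of_degree_le ?_ ?_) ?_
        · exact (natDegree_mul_le.trans (by simp)).trans (show 1 ≤ q ^ 2 by omega)
        · exact (natDegree_C_mul_X_pow_le _ _).trans (by omega)
        · exact (natDegree_C_mul_X_pow_le _ _)
    have h1 := congrArg (fun p => coeff p 1) hp
    have h2 := congrArg (fun p => coeff p q) hp
    have h3 := congrArg (fun p => coeff p (q ^ 2)) hp
    have e1 : (1 : ℕ) ≠ q := by omega
    have e2 : (1 : ℕ) ≠ q ^ 2 := by omega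
    have e3 : q ≠ q ^ 2 := by omega
    simp only [coeff_add, coeff_C_mul, coeff_X, coeff_X_pow, e1, e2, e3, e3.symm,
      if_true, if_false, coeff_zero, mul_zero, mul_one, add_zero, zero_add] at h1 h2 h3
    exact ⟨h1, h2, h3⟩
  · intro x hx
    by_contra hne
    push Not at hne
    have hp : (X ^ q - X : E[X]) = 0 := by
      apply Polynomial.eq_zero_of_natDegree_lt_card_of_eval_eq_zero _
        (f := fun o : Option F => o.elim x (algebraMap F E))
      · intro a b hab
        rcases a with _ | a <;> rcases b with _ | b
        · rfl
        · exact absurd hab.symm (hne b)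
        · exact absurd hab (hne a)
        · exact congrArg some ((algebraMap F E).injective hab)
      · intro o
        rcases o with _ | a
        · simpa [sub_eq_zero, hσ] using hx
        · have := FiniteField.pow_card a
          rw [hF] at this
          simp [← map_pow, this]
      · rw [Fintype.card_option, hF, FiniteField.X_pow_card_sub_X_natDegree_eq _ hq1]
        omega
    exact FiniteField.X_pow_card_sub_X_ne_zero E hq1 hp
  · intro t s h
    have hfr : Module.finrank F E = 3 := by
      have := Module.card_eq_pow_finrank (K := F) (V := E)
      rw [hE, hF] at this
      exact (Nat.pow_right_injective hq1 this).symm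
    let p : F[X] := X ^ 3 - C t * X ^ 2 + C s * X - 1
    have hpd : p.natDegree = 3 := by unfold p; compute_degree!
    have hirr : Irreducible p := by
      apply irreducible_of_degree_le_three_of_not_isRoot
      · rw [hpd]; simp
      · intro x hx
        apply h x
        simpa [p] using hx
    have := Fact.mk hirr
    have hfr2 : Module.finrank F (AdjoinRoot p) = 3 := by
      rw [(AdjoinRoot.powerBasis hirr.ne_zero).finrank, AdjoinRoot.powerBasis_dim, hpd]
    obtain ⟨φ⟩ := FiniteField.nonempty_algHom_of_finrank_dvd (F := F) (K := AdjoinRoot p) (L := E)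
      (by rw [hfr, hfr2])
    refine ⟨φ (AdjoinRoot.root p), ?_⟩
    have h1 : aeval (φ (AdjoinRoot.root p)) p = 0 := by
      rw [aeval_algHom_apply, AdjoinRoot.aeval_eq, AdjoinRoot.mk_self, map_zero]
    simpa [p] using h1

/-- Dickson determinant -/
def D (σ : E →ₐ[F] E) (a b c : E) : E :=
  a * σ a * σ (σ a) + b * σ b * σ (σ b) + c * σ c * σ (σ c)
    - (a * σ b * σ (σ c) + σ a * σ (σ b) * c + σ (σ a) * b * σ c)

variable {σ : E →ₐ[F] E}

lemma ker_iff (hσ : IsFrob F E σ) (a b c : E) :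
    (∃ x, x ≠ 0 ∧ a * x + b * σ x + c * σ (σ x) = 0) ↔ D σ a b c = 0 := by
  constructor
  · rintro ⟨x, hx, h⟩
    have h1 := congrArg σ h
    have h2 := congrArg σ h1
    simp only [map_add, map_mul, hσ.cube, map_zero] at h1 h2
    have : x * D σ a b c = 0 := by
      unfold D
      linear_combination (σ a * σ (σ a) - σ b * σ (σ c)) * h
        + (c * σ (σ c) - b * σ (σ a)) * h1 + (b * σ b - c * σ a) * h2
    exact (mul_eq_zero.mp this).resolve_left hx
  · intro h
    have hdet : (!![a, b, c; σ c, σ a, σ b; σ (σ b), σ (σ c), σ (σ a)] : Matrix _ _ E).det = 0 := by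
      rw [Matrix.det_fin_three]
      simp
      rw [← h]; unfold D; ring
    obtain ⟨v, hv, hv0⟩ := Matrix.exists_mulVec_eq_zero_iff.mpr hdet
    have r0 := congrFun hv0 0
    have r1 := congrFun hv0 1
    have r2 := congrFun hv0 2
    simp [Matrix.mulVec, dotProduct, Fin.sum_univ_three] at r0 r1 r2
    have s2 := congrArg σ r2
    have s1 := congrArg σ (congrArg σ r1)
    simp only [map_add, map_mul, hσ.cube, map_zero] at s2 s1
    by_contra hcon
    push Not at hcon
    have hz : ∀ e, v 0 * e + σ (v 2) * σ e + σ (σ (v 1)) * σ (σ e) = 0 := by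
      intro e
      by_contra hne
      apply hcon _ hne
      simp only [map_add, map_mul, hσ.cube]
      linear_combination e * r0 + σ e * s2 + σ (σ e) * s1
    obtain ⟨h0, h2, h1⟩ := hσ.indep _ _ _ hz
    apply hv
    ext i
    fin_cases i
    · simpa using h0
    · simpa using h1
    · simpa using h2

lemma D_adj (hσ : IsFrob F E σ) (a b c : E) : D σ a (σ c) (σ (σ b)) = D σ a b c := by
  unfold D; simp only [hσ.cube]; ring

lemma planar_iff (hσ : IsFrob F E σ) [Finite E] (A B : F) (f : E → E)
    (hf : ∀ x, f x = x * (σ (σ x) + algebraMap F E A * σ x + algebraMap F E B * x)) :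
    (∀ C : E, C ≠ 0 → Function.Bijective (fun x => f (x + C) - f x)) ↔
    ∀ b : E, b ≠ 0 → D σ (2 * algebraMap F E B * b) (σ b + algebraMap F E A * b)
      (b + algebraMap F E A * σ (σ b)) ≠ 0 := by
  set a := algebraMap F E A with ha
  set d := algebraMap F E B with hd
  have sa : σ a = a := σ.commutes A
  have sd : σ d = d := σ.commutes B
  have key : ∀ C x, f (x + C) - f x =
      ((σ (σ C) + a * σ C + 2 * d * C) * x + (a * C) * σ x + C * σ (σ x)) + f C := by
    intro C x
    simp only [hf, map_add]; ring
  have s1 : (∀ C : E, C ≠ 0 → Function.Bijective (fun x => f (x + C) - f x)) ↔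
      ∀ C : E, C ≠ 0 → ∀ x, x ≠ 0 →
        (σ (σ C) + a * σ C + 2 * d * C) * x + (a * C) * σ x + C * σ (σ x) ≠ 0 := by
    refine forall₂_congr fun C hC => ?_
    rw [← Finite.injective_iff_bijective]
    constructor
    · intro h x hx h0
      apply hx
      apply h
      simp only [key, h0, map_zero]
      ring
    · intro h x y hxy
      simp only [key] at hxy
      by_contra hne
      apply h (x - y) (sub_ne_zero.mpr hne)
      simp only [map_sub]
      linear_combination hxy
  have s2 : (∀ C : E, C ≠ 0 → ∀ x, x ≠ 0 →
        (σ (σ C) + a * σ C + 2 * d * C) * x + (a * C) * σ x + C * σ (σ x) ≠ 0) ↔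
      ∀ C : E, C ≠ 0 → ∀ b, b ≠ 0 →
        (σ (σ C) + a * σ C + 2 * d * C) * b + σ C * σ b + σ (σ (a * C)) * σ (σ b) ≠ 0 := by
    refine forall₂_congr fun C hC => ?_
    have h1 := ker_iff hσ (σ (σ C) + a * σ C + 2 * d * C) (a * C) C
    have h2 := ker_iff hσ (σ (σ C) + a * σ C + 2 * d * C) (σ C) (σ (σ (a * C)))
    rw [D_adj hσ, ← h1] at h2
    have h3 := not_congr h2
    push Not at h3
    exact h3.symm
  rw [s1, s2]
  have s3 : ∀ C b, (σ (σ C) + a * σ C + 2 * d * C) * b + σ C * σ b + σ (σ (a * C)) * σ (σ b) =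
      (2 * d * b) * C + (σ b + a * b) * σ C + (b + a * σ (σ b)) * σ (σ C) := by
    intro C b
    simp only [map_mul, sa]; ring
  constructor
  · intro h b hb h0
    obtain ⟨C, hC, hC0⟩ := (ker_iff hσ _ _ _).mpr h0
    apply h C hC b hb
    rw [s3, hC0]
  · intro h C hC b hb h0
    rw [s3] at h0
    exact h b hb ((ker_iff hσ _ _ _).mp ⟨C, hC, h0⟩)

lemma H_eq (hσ : IsFrob F E σ) (A B : F) (b : E) :
    D σ (2 * algebraMap F E B * b) (σ b + algebraMap F E A * b)
      (b + algebraMap F E A * σ (σ b)) =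
    2 * (algebraMap F E (4 * B ^ 3 + A ^ 3 + 1 - 6 * A * B) * (b * σ b * σ (σ b))
      + algebraMap F E (A * (1 - A * B)) *
        (b ^ 2 * σ (σ b) + (σ b) ^ 2 * b + (σ (σ b)) ^ 2 * σ b)
      + algebraMap F E (A ^ 2 - B) *
        (b ^ 2 * σ b + (σ b) ^ 2 * σ (σ b) + (σ (σ b)) ^ 2 * b)) := by
  unfold D
  simp only [map_add, map_mul, hσ.cube, AlgHom.commutes, map_sub, map_pow, map_ofNat, map_one]
  ring

/-- Passing to norm one elements. -/
lemma norm_one_iff (hσ : IsFrob F E σ) (P Q R : F) :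
    (∃ b : E, b ≠ 0 ∧ algebraMap F E R * (b * σ b * σ (σ b))
      + algebraMap F E P * (b ^ 2 * σ (σ b) + (σ b) ^ 2 * b + (σ (σ b)) ^ 2 * σ b)
      + algebraMap F E Q * (b ^ 2 * σ b + (σ b) ^ 2 * σ (σ b) + (σ (σ b)) ^ 2 * b) = 0) ↔
    ∃ u : E, u * σ u * σ (σ u) = 1 ∧ algebraMap F E R
      + algebraMap F E P * (u * σ u + σ u * σ (σ u) + σ (σ u) * u)
      + algebraMap F E Q * (u + σ u + σ (σ u)) = 0 := by
  constructor
  · rintro ⟨b, hb, h⟩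
    have hb1 : σ b ≠ 0 := by simpa using hb
    have hb2 : σ (σ b) ≠ 0 := by simpa using hb
    refine ⟨σ b / b, ?_, ?_⟩
    · simp only [map_div₀, hσ.cube]; field_simp
    · simp only [map_div₀, hσ.cube]; field_simp
      linear_combination h
  · rintro ⟨u, hu, h⟩
    have : D σ u (-1) 0 = 0 := by
      unfold D; simp only [map_neg, map_one, map_zero]; linear_combination hu
    obtain ⟨b, hb, h0⟩ := (ker_iff hσ _ _ _).mpr this
    have e1 : σ b = u * b := by linear_combination -h0
    have e2 : σ (σ b) = σ u * (u * b) := by rw [e1, map_mul, e1]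
    refine ⟨b, hb, ?_⟩
    rw [e2, e1]
    have hu0 : u * (σ u) * σ (σ u) = 1 := hu
    generalize σ (σ u) = w at *
    generalize σ u = v at *
    linear_combination (u ^ 2 * v * b ^ 3) * h - b ^ 3 *
      (algebraMap F E P * (u * v + u ^ 2) + algebraMap F E Q * u) * hu0

lemma exists_norm_one (hσ : IsFrob F E σ) (t s : F) (h : ∀ x : F, x ^ 3 - t * x ^ 2 + s * x - 1 ≠ 0) :
    ∃ u : E, u * σ u * σ (σ u) = 1 ∧ u + σ u + σ (σ u) = algebraMap F E t ∧
      u * σ u + σ u * σ (σ u) + σ (σ u) * u = algebraMap F E s := by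
  obtain ⟨u, hu⟩ := hσ.root t s h
  have hu1 := congrArg σ hu
  have hu2 := congrArg σ hu1
  simp only [map_add, map_sub, map_mul, map_pow, AlgHom.commutes, map_one, map_zero] at hu1 hu2
  have n1 : σ u ≠ u := by
    intro h0
    obtain ⟨a, rfl⟩ := hσ.fix u h0
    apply h a
    apply (algebraMap F E).injective
    simpa using hu
  have n2 : σ (σ u) ≠ σ u := fun h0 => n1 (σ.injective h0)
  have n3 : σ (σ u) ≠ u := fun h0 => by
    have := congrArg σ h0
    rw [hσ.cube] at this
    exact n1 this.symm
  refine ⟨u, ?_⟩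
  generalize σ (σ u) = w at *
  generalize σ u = v at *
  generalize algebraMap F E t = t at *
  generalize algebraMap F E s = s at *
  have a1 : u ^ 2 + u * v + v ^ 2 - t * (u + v) + s = 0 := by
    apply mul_left_cancel₀ (sub_ne_zero.mpr n1)
    linear_combination hu1 - hu
  have a2 : u ^ 2 + u * w + w ^ 2 - t * (u + w) + s = 0 := by
    apply mul_left_cancel₀ (sub_ne_zero.mpr n3)
    linear_combination hu2 - hu
  have a3 : u + v + w - t = 0 := by
    apply mul_left_cancel₀ (sub_ne_zero.mpr n2)
    linear_combination a2 - a1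
  have ht : t = u + v + w := by linear_combination -a3
  subst ht
  have hs : s = u * v + v * w + w * u := by linear_combination a1
  subst hs
  exact ⟨by linear_combination hu, rfl, rfl⟩

lemma cond_iff (hσ : IsFrob F E σ) [Finite F] (P Q R : F) :
    (¬ ∃ u : E, u * σ u * σ (σ u) = 1 ∧ algebraMap F E R
      + algebraMap F E P * (u * σ u + σ u * σ (σ u) + σ (σ u) * u)
      + algebraMap F E Q * (u + σ u + σ (σ u)) = 0) ↔
    R ≠ 0 ∧ ((P = 0 ∧ Q = 0) ∨ (P ≠ 0 ∧ Q ≠ 0 ∧ Q ^ 3 + P ^ 3 = P * Q * R)) := by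
  have line : ∀ t s : F, R + P * s + Q * t = 0 → (∀ x : F, x ^ 3 - t * x ^ 2 + s * x - 1 ≠ 0) →
      ∃ u : E, u * σ u * σ (σ u) = 1 ∧ algebraMap F E R
      + algebraMap F E P * (u * σ u + σ u * σ (σ u) + σ (σ u) * u)
      + algebraMap F E Q * (u + σ u + σ (σ u)) = 0 := by
    intro t s hl hx
    obtain ⟨u, h1, h2, h3⟩ := exists_norm_one hσ t s hx
    refine ⟨u, h1, ?_⟩
    rw [h2, h3]
    simpa using congrArg (algebraMap F E) hl
  constructor
  · intro hno
    by_cases hP : P = 0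
    · by_cases hQ : Q = 0
      · refine ⟨?_, Or.inl ⟨hP, hQ⟩⟩
        intro hR
        exact hno ⟨1, by simp, by simp [hP, hQ, hR]⟩
      · exfalso
        obtain ⟨s, hs⟩ := miss (fun x => (1 - x ^ 3 + (-R / Q) * x ^ 2) / x) (0 : F)
        apply hno
        apply line (-R / Q) s
        · rw [hP]; field_simp; ring
        · intro x hx
          by_cases hx0 : x = 0
          · rw [hx0] at hx; simp at hx
          · apply hs x hx0
            rw [div_eq_iff hx0]
            linear_combination -hx
    · by_cases hQ : Q = 0
      · exfalso
        obtain ⟨t, ht⟩ := miss (fun x => (x ^ 3 + (-R / P) * x - 1) / x ^ 2) (0 : F)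
        apply hno
        apply line t (-R / P)
        · rw [hQ]; field_simp; ring
        · intro x hx
          by_cases hx0 : x = 0
          · rw [hx0] at hx; simp at hx
          · apply ht x hx0
            rw [div_eq_iff (pow_ne_zero 2 hx0)]
            linear_combination hx
      · by_cases hK : Q ^ 3 + P ^ 3 = P * Q * R
        · refine ⟨?_, Or.inr ⟨hP, hQ, hK⟩⟩
          intro hR
          apply hno
          rw [hR] at hK
          refine ⟨algebraMap F E (-Q / P), ?_, ?_⟩
          · simp only [AlgHom.commutes, ← map_mul]
            rw [← map_one (algebraMap F E)]
            congr 1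
            field_simp
            linear_combination -hK
          · simp only [AlgHom.commutes, ← map_mul, ← map_add]
            rw [← map_zero (algebraMap F E)]
            congr 1
            rw [hR]
            field_simp
            ring
        · exfalso
          obtain ⟨t, ht⟩ := miss
            (fun x => (x ^ 3 - (R / P) * x - 1) / (x ^ 2 + (Q / P) * x)) (0 : F)
          apply hno
          apply line t ((-R - Q * t) / P)
          · field_simp; ring
          · intro x hx
            by_cases hx0 : x = 0
            · rw [hx0] at hx; simp at hx
            · by_cases hx1 : x = -Q / P
              · apply hK
                rw [hx1] at hx
                field_simp at hx
                linear_combination -hx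
              · apply ht x hx0
                have : x ^ 2 + (Q / P) * x ≠ 0 := by
                  intro h0
                  apply hx1
                  apply mul_left_cancel₀ hx0
                  linear_combination h0
                rw [div_eq_iff this]
                field_simp
                field_simp at hx
                linear_combination hx
  · rintro ⟨hR, hc⟩ ⟨u, hu, h⟩
    rcases hc with ⟨hP, hQ⟩ | ⟨hP, hQ, hK⟩
    · rw [hP, hQ] at h
      simp at h
      exact hR h
    · set m := -Q / P with hm
      have hmP : m * P = -Q := by rw [hm]; field_simp
      have hmu : u = algebraMap F E m := by
        have hKE := congrArg (algebraMap F E) hK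
        have hmE := congrArg (algebraMap F E) hmP
        have hPE : algebraMap F E P ≠ 0 := by simpa using hP
        have hcm : σ (algebraMap F E m) = algebraMap F E m := σ.commutes m
        have h0 : (algebraMap F E m - u) * (algebraMap F E m - σ u)
            * (algebraMap F E m - σ (σ u)) = 0 := by
          apply mul_left_cancel₀ (pow_ne_zero 3 hPE)
          simp only [map_add, map_mul, map_pow, map_neg] at hKE hmE
          generalize σ (σ u) = w at *
          generalize σ u = v at *
          generalize algebraMap F E m = m at *
          generalize algebraMap F E P = P at *
          generalize algebraMap F E Q = Q at *
          generalize algebraMap F E R = R at *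
          have hQm : Q = - (m * P) := by linear_combination hmE
          subst hQm
          linear_combination (-1 : E) * hKE + m * P ^ 2 * h - P ^ 3 * hu
        rcases mul_eq_zero.mp h0 with h0 | h0
        · rcases mul_eq_zero.mp h0 with h0 | h0
          · linear_combination -h0
          · apply σ.injective; change σ u = σ _; rw [hcm]; linear_combination -h0
        · apply σ.injective; apply σ.injective; change σ (σ u) = σ (σ _); rw [hcm, hcm]; linear_combination -h0
      have hm3 : m ^ 3 = 1 := by
        apply (algebraMap F E).injective
        rw [hmu] at hu
        simp only [AlgHom.commutes] at hu
        rw [map_pow, map_one]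
        linear_combination hu
      have : P * Q * R = 0 := by
        have hQm : Q = - (m * P) := by linear_combination hmP
        rw [← hK, hQm]
        linear_combination -P ^ 3 * hm3
      simp [hP, hQ, hR] at this

end

section
variable {F : Type*} [Field F]

lemma classify (h2 : (2 : F) ≠ 0) (A B : F) :
    ((4 * B ^ 3 + A ^ 3 + 1 - 6 * A * B) ≠ 0 ∧ ((A * (1 - A * B) = 0 ∧ A ^ 2 - B = 0) ∨
      (A * (1 - A * B) ≠ 0 ∧ A ^ 2 - B ≠ 0 ∧ (A ^ 2 - B) ^ 3 + (A * (1 - A * B)) ^ 3 =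
        (A * (1 - A * B)) * (A ^ 2 - B) * (4 * B ^ 3 + A ^ 3 + 1 - 6 * A * B)))) ↔
    (A ^ 3 ≠ -1 ∧ B = 0) ∨ ((B ≠ 0 ∧ B ^ 3 ≠ 1) ∧ A = B ^ 2) ∨
      ((A ≠ 0 ∧ A ^ 3 ≠ 1 ∧ A ^ 3 ≠ -1) ∧ B = (A ^ 3 + 1) / (2 * A)) := by
  constructor
  · rintro ⟨hR, ⟨hP, hQ⟩ | ⟨hP, hQ, hK⟩⟩
    · have hB : B = A ^ 2 := by linear_combination -hQ
      subst hB
      rcases mul_eq_zero.mp hP with h | h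
      · left; subst h; simp
      · exfalso; apply hR
        have h1 : A ^ 3 = 1 := by linear_combination -h
        linear_combination (4 * A ^ 3 - 1) * h1
    · have hf : B * (A - B ^ 2) * (A ^ 3 - 2 * A * B + 1) ^ 2 = 0 := by linear_combination hK
      have hA : A ≠ 0 := left_ne_zero_of_mul hP
      rcases mul_eq_zero.mp hf with h | h
      · rcases mul_eq_zero.mp h with h | h
        · left
          subst h
          exact ⟨fun h => hR (by linear_combination h), rfl⟩
        · right; left
          have h' : A = B ^ 2 := by linear_combination h
          subst h'
          refine ⟨⟨?_, ?_⟩, rfl⟩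
          · rintro rfl; simp at hA
          · intro h1; apply hQ; linear_combination B * h1
      · right; right
        have h' := pow_eq_zero_iff (two_ne_zero) |>.mp h
        refine ⟨⟨hA, ?_, ?_⟩, ?_⟩
        · intro h1
          apply hP
          apply mul_left_cancel₀ h2
          linear_combination A * h' - A * h1
        · intro h1
          have hB : B = 0 := by
            have : (2 * A) * B = 0 := by linear_combination h1 - h'
            simpa [h2, hA] using this
          apply hR
          rw [hB]; linear_combination h1
        · rw [eq_div_iff (mul_ne_zero h2 hA)]; linear_combination -h'
  · rintro (⟨h, rfl⟩ | ⟨⟨h0, h1⟩, rfl⟩ | ⟨⟨hA, h1, h3⟩, hB⟩)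
    · refine ⟨fun h' => h (by linear_combination h'), ?_⟩
      by_cases hA : A = 0
      · left; simp [hA]
      · right
        refine ⟨by simpa using hA, by simpa using hA, by ring⟩
    · have hd : B ^ 3 - 1 ≠ 0 := sub_ne_zero.mpr h1
      refine ⟨?_, Or.inr ⟨?_, ?_, by ring⟩⟩
      · intro h; apply pow_ne_zero 2 hd; linear_combination h
      · intro h; apply mul_ne_zero (pow_ne_zero 2 h0) hd; linear_combination -h
      · intro h; apply mul_ne_zero h0 hd; linear_combination h
    · have hd : A ^ 3 - 1 ≠ 0 := sub_ne_zero.mpr h1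
      have hd' : A ^ 3 + 1 ≠ 0 := fun h => h3 (by linear_combination h)
      have hT : 2 * A * B = A ^ 3 + 1 := by rw [hB]; field_simp
      refine ⟨?_, Or.inr ⟨?_, ?_, ?_⟩⟩
      · intro h
        apply mul_ne_zero hd' (pow_ne_zero 2 hd)
        linear_combination 2 * A ^ 3 * h + (6 * A ^ 3 - (4 * A ^ 2 * B ^ 2
          + 2 * A * B * (A ^ 3 + 1) + (A ^ 3 + 1) ^ 2)) * hT
      · intro h
        apply mul_ne_zero hA hd
        linear_combination -2 * h - A * hT
      · intro h
        apply hd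
        linear_combination 2 * A * h + hT
      · have : B * (A - B ^ 2) * (A ^ 3 - 2 * A * B + 1) ^ 2 = 0 := by
          rw [hT]; ring
        linear_combination this

variable [Fintype F] [DecidableEq F]

lemma card_cube_one : (Finset.univ.filter (fun x : F => x ^ 3 = 1)).card
    = Nat.gcd 3 (Fintype.card F - 1) := by
  have h := IsCyclic.card_powMonoidHom_ker (G := Fˣ) 3
  rw [Nat.card_eq_fintype_card (α := Fˣ), Fintype.card_units, Nat.gcd_comm] at h
  rw [← h, Nat.card_eq_fintype_card, ← Fintype.card_coe]
  symm
  refine Fintype.card_of_bijective (f := fun u : (powMonoidHom 3 : Fˣ →* Fˣ).ker =>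
    ⟨((u : Fˣ) : F), ?_⟩) ⟨?_, ?_⟩
  · have := u.2
    rw [MonoidHom.mem_ker, powMonoidHom_apply] at this
    simp [← Units.val_pow_eq_pow_val, this]
  · intro u v huv
    ext
    simpa using huv
  · rintro ⟨x, hx⟩
    simp only [Finset.mem_filter, Finset.mem_univ, true_and] at hx
    have hx0 : x ≠ 0 := by rintro rfl; simp at hx
    refine ⟨⟨Units.mk0 x hx0, ?_⟩, rfl⟩
    rw [MonoidHom.mem_ker, powMonoidHom_apply]
    ext
    simpa using hx

lemma card_cube_neg_one : (Finset.univ.filter (fun x : F => x ^ 3 = -1)).card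
    = Nat.gcd 3 (Fintype.card F - 1) := by
  rw [← card_cube_one]
  refine Finset.card_bij (fun x _ => -x) ?_ ?_ ?_
  · intro x hx
    simp only [Finset.mem_filter, Finset.mem_univ, true_and] at hx ⊢
    linear_combination -hx
  · intro x _ y _ h
    exact neg_injective h
  · intro x hx
    simp only [Finset.mem_filter, Finset.mem_univ, true_and] at hx
    refine ⟨-x, ?_, neg_neg x⟩
    simp only [Finset.mem_filter, Finset.mem_univ, true_and]
    linear_combination -hx

lemma count (h2 : (2 : F) ≠ 0) :
    Nat.card {p : F × F // (p.1 ^ 3 ≠ -1 ∧ p.2 = 0) ∨ ((p.2 ≠ 0 ∧ p.2 ^ 3 ≠ 1) ∧ p.1 = p.2 ^ 2) ∨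
      ((p.1 ≠ 0 ∧ p.1 ^ 3 ≠ 1 ∧ p.1 ^ 3 ≠ -1) ∧ p.2 = (p.1 ^ 3 + 1) / (2 * p.1))}
    = 3 * Fintype.card F - 2 - 4 * Nat.gcd 3 (Fintype.card F - 1) := by
  set g := Nat.gcd 3 (Fintype.card F - 1) with hg
  let T1 : Finset F := Finset.univ.filter (fun x => x ^ 3 ≠ -1)
  let T2 : Finset F := Finset.univ.filter (fun x => x ≠ 0 ∧ x ^ 3 ≠ 1)
  let T3 : Finset F := Finset.univ.filter (fun x => x ≠ 0 ∧ x ^ 3 ≠ 1 ∧ x ^ 3 ≠ -1)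
  let R1 : Finset F := Finset.univ.filter (fun x => x ^ 3 = 1)
  let R2 : Finset F := Finset.univ.filter (fun x => x ^ 3 = -1)
  have hR1 : R1.card = g := card_cube_one
  have hR2 : R2.card = g := card_cube_neg_one
  have c1 : T1.card + g = Fintype.card F := by
    rw [← hR2, ← Finset.card_univ, ← Finset.card_union_of_disjoint]
    · congr 1; ext x; simp [T1, R2]; tauto
    · rw [Finset.disjoint_left]; intro x; simp [T1, R2]
  have c2 : T2.card + g + 1 = Fintype.card F := by
    rw [← hR1, ← Finset.card_univ, ← Finset.card_union_of_disjoint, ← Finset.card_singleton (0 : F),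
      ← Finset.card_union_of_disjoint]
    · congr 1; ext x; simp [T2, R1]; tauto
    · rw [Finset.disjoint_right]; intro x hx; simp at hx; simp [T2, R1, hx]
    · rw [Finset.disjoint_left]; intro x; simp [T2, R1]
  have c3 : T3.card + g + g + 1 = Fintype.card F := by
    nth_rw 1 [← hR1]
    rw [← hR2, ← Finset.card_univ, ← Finset.card_union_of_disjoint,
      ← Finset.card_union_of_disjoint, ← Finset.card_singleton (0 : F),
      ← Finset.card_union_of_disjoint]
    · congr 1; ext x; simp [T3, R1, R2]; tauto
    · rw [Finset.disjoint_right]; intro x hx; simp at hx; simp [T3, R1, R2, hx]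
    · rw [Finset.disjoint_right]; intro x hx
      simp [R2] at hx
      simp [T3, R1, hx]
      intro h
      apply h2; linear_combination -h
    · rw [Finset.disjoint_left]; intro x; simp [T3, R1]; tauto
  let S1 : Finset (F × F) := T1.image (fun x => (x, 0))
  let S2 : Finset (F × F) := T2.image (fun x => (x ^ 2, x))
  let S3 : Finset (F × F) := T3.image (fun x => (x, (x ^ 3 + 1) / (2 * x)))
  have k1 : S1.card = T1.card := Finset.card_image_of_injective _ fun x y h => (Prod.ext_iff.mp h).1
  have k2 : S2.card = T2.card := Finset.card_image_of_injective _ fun x y h => (Prod.ext_iff.mp h).2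
  have k3 : S3.card = T3.card := Finset.card_image_of_injective _ fun x y h => (Prod.ext_iff.mp h).1
  have d12 : Disjoint S1 S2 := by
    rw [Finset.disjoint_left]
    rintro ⟨a, b⟩ h h'
    simp [S1, S2, T1, T2] at h h'
    exact h'.1.1 h.2.symm
  have d123 : Disjoint (S1 ∪ S2) S3 := by
    rw [Finset.disjoint_left]
    rintro ⟨a, b⟩ h h'
    simp [S1, S2, S3, T1, T2, T3] at h h'
    obtain ⟨⟨ha, h1, h3⟩, hb⟩ := h'
    have hT : a ^ 3 + 1 = 2 * a * b := by rw [← hb]; field_simp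
    rcases h with ⟨_, h⟩ | ⟨⟨h, h'⟩, h''⟩
    · apply h3; rw [← h] at hT; linear_combination hT
    · apply h'
      rw [← h''] at hT
      have : (b ^ 3 - 1) ^ 2 = 0 := by linear_combination hT
      have := pow_eq_zero_iff (two_ne_zero) |>.mp this
      linear_combination this
  rw [Nat.card_eq_fintype_card, Fintype.card_of_subtype (S1 ∪ S2 ∪ S3)]
  · rw [Finset.card_union_of_disjoint d123, Finset.card_union_of_disjoint d12, k1, k2, k3]
    omega
  · rintro ⟨a, b⟩
    simp [S1, S2, S3, T1, T2, T3, eq_comm]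

end

end PlanarCount

/-- For `q > 3` an odd prime power, the number of pairs `(A, B) ∈ F_q × F_q` such that
`f_{A,B}(x) = x (x^{q²} + A x^q + B x)` is planar on `F_{q³}` is `3q - 2 - 4·gcd(3, q-1)`. -/
theorem stmt_19 (q : ℕ) (hp : IsPrimePow q) (hq : Odd q) (hq3 : 3 < q)
    (F E : Type*) [Field F] [Fintype F] [Field E] [Fintype E] [Algebra F E]
    (hF : Fintype.card F = q) (hE : Fintype.card E = q ^ 3) :
    Nat.card {p : F × F // ∀ C : E, C ≠ 0 → Function.Bijective (fun x : E =>
        (x + C) * ((x + C) ^ (q ^ 2) + algebraMap F E p.1 * (x + C) ^ q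
            + algebraMap F E p.2 * (x + C))
          - x * (x ^ (q ^ 2) + algebraMap F E p.1 * x ^ q + algebraMap F E p.2 * x))}
      = 3 * q - 2 - 4 * Nat.gcd 3 (q - 1) := by
  classical
  obtain ⟨σ, hσ, hpow⟩ := PlanarCount.isFrob_frob (F := F) (E := E) q hF hE
  have h2 : (2 : F) ≠ 0 := by
    apply Ring.two_ne_zero
    intro h
    have := FiniteField.even_card_of_char_two h
    rw [hF] at this
    rw [Nat.odd_iff] at hq
    omega
  have h2E : (2 : E) ≠ 0 := by
    intro h
    apply h2
    apply (algebraMap F E).injective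
    rw [map_ofNat, map_zero, h]
  rw [← hF, ← PlanarCount.count h2, hF]
  apply Nat.card_congr
  apply Equiv.subtypeEquivRight
  rintro ⟨A, B⟩
  have h1 := PlanarCount.planar_iff hσ A B
    (fun x => x * (x ^ (q ^ 2) + algebraMap F E A * x ^ q + algebraMap F E B * x))
    (fun x => by simp only [hpow, ← pow_mul, pow_two])
  refine h1.trans ?_
  rw [← PlanarCount.classify h2, ← PlanarCount.cond_iff hσ, ← PlanarCount.norm_one_iff hσ]
  push Not
  refine forall₂_congr fun b hb => ?_
  rw [PlanarCount.H_eq hσ]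
  simp [h2E]
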